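/- Let α, β ≥ 2 be integers satisfying α² − 125β² = 4 and α + β ≡ 0 (mod 25), and set d = (α+β)² − 4 and ε₁ = ((α+β) + √d)/2 ∈ ℝ. Then ε₁² is not a fifth power in the real quadratic field k₁ = ℚ(√d): there is no element x of the subfield of ℝ generated over ℚ by √d such that x⁵ = ε₁². -/

import Mathlib

/-- One step of the recurrence `u (m + 2) = 123 * u (m + 1) - u m` on consecutive pairs. -/
def pellStep {R : Type*} [CommRing R] (v : R × R) : R × R := (v.2, 123 * v.2 - v.1)

/-- The nonnegative solutions of `α² - 125β² = 4` are generated by `(123 + 11√125)/2`; along them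
the sum `α + β` follows the recurrence `u (m + 2) = 123 * u (m + 1) - u m`. -/
theorem exists_pellStep_iterate_eq (n : ℕ) : ∀ α β : ℤ, 0 ≤ α → 0 ≤ β → β ≤ n →
    α ^ 2 - 125 * β ^ 2 = 4 →
    ∃ m : ℕ, pellStep^[m] ((2, 134) : ℤ × ℤ) =
      (α + β, (123 * α + 1375 * β) / 2 + (123 * β + 11 * α) / 2) := by
  induction n with
  | zero =>
    intro α β hα hβ hn h
    obtain rfl : β = 0 := by push_cast at hn; omega
    obtain rfl : α = 2 := by nlinarith
    exact ⟨0, by simp⟩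
  | succ n ih =>
    intro α β hα hβ hn h
    rcases hβ.eq_or_lt with rfl | hβ'
    · obtain rfl : α = 2 := by nlinarith
      exact ⟨0, by simp⟩
    have hpar : (α + β) % 2 = 0 := by
      have h2 : Even (α ^ 2 - 125 * β ^ 2) := h ▸ ⟨2, by norm_num⟩
      rw [Int.even_sub, Int.even_mul, Int.even_pow, Int.even_pow] at h2
      have h125 : ¬ Even (125 : ℤ) := by decide
      have hiff : Even α ↔ Even β := by simpa [h125] using h2
      exact Int.even_iff.mp (Int.even_add.mpr hiff)
    have hβ11 : 11 ≤ β := by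
      by_contra hlt
      have hα' : α ≤ 112 := by nlinarith
      clear ih hn hpar
      interval_cases β <;> interval_cases α <;> omega
    obtain ⟨γ, hγ⟩ : ∃ γ, 123 * α - 1375 * β = 2 * γ := ⟨(123 * α - 1375 * β) / 2, by omega⟩
    obtain ⟨δ, hδ⟩ : ∃ δ, 123 * β - 11 * α = 2 * δ := ⟨(123 * β - 11 * α) / 2, by omega⟩
    have hγ0 : 0 ≤ γ := by nlinarith
    have hδ0 : 0 ≤ δ := by nlinarith
    have hδn : δ ≤ n := by
      push_cast at hn
      have : 11 * β < α := by nlinarith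
      omega
    have hnorm : γ ^ 2 - 125 * δ ^ 2 = 4 := by
      have : (2 * γ) ^ 2 - 125 * (2 * δ) ^ 2 = 16 := by
        rw [← hγ, ← hδ]; linear_combination 4 * h
      linarith
    obtain ⟨m, hm⟩ := ih γ δ hγ0 hδ0 hδn hnorm
    refine ⟨m + 1, ?_⟩
    rw [Function.iterate_succ_apply', hm]
    ext <;> simp only [pellStep] <;> omega

theorem map_pellStep_iterate (n m : ℕ) (v : ℤ × ℤ) :
    pellStep^[m] ((v.1 : ZMod n), (v.2 : ZMod n)) =
      (((pellStep^[m] v).1 : ZMod n), ((pellStep^[m] v).2 : ZMod n)) := by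
  induction m with
  | zero => rfl
  | succ m ih => simp [Function.iterate_succ_apply', ih, pellStep]

/-- Residues of `pellStep`-sequences whose initial pair is periodic. -/
theorem cast_pellStep_iterate {n k : ℕ}
    (hper : pellStep^[k] ((2, 134) : ZMod n × ZMod n) = (2, 134)) (m : ℕ) :
    (((pellStep^[m] ((2, 134) : ℤ × ℤ)).1 : ℤ) : ZMod n) =
      (pellStep^[m % k] ((2, 134) : ZMod n × ZMod n)).1 := by
  have hp : Function.IsPeriodicPt pellStep k ((2, 134) : ZMod n × ZMod n) := hper
  rw [hp.iterate_mod_apply]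
  have := map_pellStep_iterate n m (2, 134)
  push_cast at this
  rw [this]

theorem quintic_ne_mod_31 :
    ∀ t : ZMod 31, t ^ 5 - 5 * t ^ 3 + 5 * t ≠ (pellStep^[32] ((2, 134) : ZMod 31 × ZMod 31)).1 := by
  decide +kernel

theorem quintic_ne_mod_2251 : ∀ t : ZMod 2251,
    t ^ 5 - 5 * t ^ 3 + 5 * t ≠ (pellStep^[7] ((2, 134) : ZMod 2251 × ZMod 2251)).1 ∧
    t ^ 5 - 5 * t ^ 3 + 5 * t ≠ (pellStep^[57] ((2, 134) : ZMod 2251 × ZMod 2251)).1 := by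
  decide +kernel

/-- `α + β` is not a value of the Dickson polynomial `X⁵ - 5X³ + 5X`. -/
theorem quintic_ne_add (α β : ℤ) (hα : 0 ≤ α) (hβ : 0 ≤ β)
    (hpell : α ^ 2 - 125 * β ^ 2 = 4) (hcong : (25 : ℤ) ∣ (α + β)) (t : ℤ) :
    t ^ 5 - 5 * t ^ 3 + 5 * t ≠ α + β := by
  intro ht
  obtain ⟨m, hm⟩ := exists_pellStep_iterate_eq β.toNat α β hα hβ (by omega) hpell
  have h25 := cast_pellStep_iterate (n := 25) (k := 50) (by decide +kernel) m
  have h31 := cast_pellStep_iterate (n := 31) (k := 75) (by decide +kernel) m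
  have h2251 := cast_pellStep_iterate (n := 2251) (k := 75) (by decide +kernel) m
  rw [hm] at h25 h31 h2251
  simp only at h25 h31 h2251
  rw [(ZMod.intCast_zmod_eq_zero_iff_dvd _ 25).mpr hcong] at h25
  rw [← ht] at h31 h2251
  push_cast at h31 h2251
  have hres : ∀ r < 50, (0 : ZMod 25) = (pellStep^[r] ((2, 134) : ZMod 25 × ZMod 25)).1 →
      r % 25 = 7 := by decide +kernel
  have hm25 := hres _ (Nat.mod_lt _ (by norm_num)) h25
  obtain h | h | h : m % 75 = 7 ∨ m % 75 = 32 ∨ m % 75 = 57 := by omega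
  · rw [h] at h2251
    exact (quintic_ne_mod_2251 _).1 h2251
  · rw [h] at h31
    exact quintic_ne_mod_31 _ h31
  · rw [h] at h2251
    exact (quintic_ne_mod_2251 _).2 h2251

/-- Coordinates with respect to `1, r` are unique when `r` is irrational. -/
theorem Irrational.eq_and_eq_of_add_mul_eq {r : ℝ} (hr : Irrational r) {a b p q : ℚ}
    (h : (a : ℝ) + b * r = p + q * r) : a = p ∧ b = q := by
  have hb : b = q := by
    by_contra hne
    have hne' : (b : ℝ) - q ≠ 0 := sub_ne_zero.mpr (by exact_mod_cast hne)
    refine hr ⟨(p - a) / (b - q), ?_⟩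
    push_cast
    rw [div_eq_iff hne']
    linear_combination -h
  subst hb
  exact ⟨by exact_mod_cast add_right_cancel h, rfl⟩

theorem exists_eq_add_mul_of_mem_adjoin {r : ℝ} (hr : Irrational r) {d : ℚ}
    (hsq : r ^ 2 = d) {x : ℝ} (hx : x ∈ IntermediateField.adjoin ℚ {r}) :
    ∃ p q : ℚ, x = p + q * r := by
  induction hx using IntermediateField.adjoin_induction with
  | mem x hx =>
    rw [Set.mem_singleton_iff] at hx
    exact ⟨0, 1, by simp [hx]⟩
  | algebraMap a => exact ⟨a, 0, by simp⟩
  | add x y _ _ hx hy =>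
    obtain ⟨p, q, rfl⟩ := hx
    obtain ⟨a, b, rfl⟩ := hy
    exact ⟨p + a, q + b, by push_cast; ring⟩
  | inv x _ hx =>
    obtain ⟨p, q, rfl⟩ := hx
    by_cases h0 : (p : ℝ) + q * r = 0
    · exact ⟨0, 0, by simp [h0]⟩
    have h1 : (p : ℝ) + (-q : ℚ) * r ≠ 0 := by
      intro h
      obtain ⟨hp, hq⟩ := hr.eq_and_eq_of_add_mul_eq (a := p) (b := -q) (p := 0) (q := 0)
        (by rw [h]; simp)
      rw [neg_eq_zero] at hq
      exact h0 (by simp [hp, hq])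
    have hN : ((p : ℝ) ^ 2 - q ^ 2 * d) ≠ 0 := by
      have := mul_ne_zero h0 h1
      intro h
      apply this
      push_cast
      linear_combination h - q ^ 2 * hsq
    refine ⟨p / (p ^ 2 - q ^ 2 * d), -q / (p ^ 2 - q ^ 2 * d), ?_⟩
    apply inv_eq_of_mul_eq_one_left
    push_cast
    field_simp
    linear_combination (-(q : ℝ) ^ 2) * hsq
  | mul x y _ _ hx hy =>
    obtain ⟨p, q, rfl⟩ := hx
    obtain ⟨a, b, rfl⟩ := hy
    exact ⟨p * a + q * b * d, p * b + q * a, by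
      push_cast; linear_combination ((q : ℝ) * b) * hsq⟩

theorem irrational_sqrt_sq_sub_four {s : ℤ} (hs : 3 ≤ s) :
    Irrational (Real.sqrt ((s ^ 2 - 4 : ℤ) : ℝ)) := by
  rw [irrational_sqrt_intCast_iff]
  refine ⟨?_, by nlinarith⟩
  rintro ⟨z, hz⟩
  have hz' : |z| * |z| = s ^ 2 - 4 := by rw [abs_mul_abs_self, hz]
  have h0 := abs_nonneg z
  have h1 : |z| < s := by nlinarith
  have h2 : s - 1 < |z| := by nlinarith
  omega

/-- If the norm-one unit `(s + √(s² - 4))/2` is a fifth power in `ℚ(√(s² - 4))`, then `s` is a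
value of the Dickson polynomial `X⁵ - 5X³ + 5X` at an integer. -/
theorem exists_quintic_eq_of_pow_five_eq {s : ℤ} {r : ℝ} (hr : Irrational r)
    (hsq : r ^ 2 = (s : ℝ) ^ 2 - 4) {y : ℝ} (hy : y ∈ IntermediateField.adjoin ℚ {r})
    (hy5 : y ^ 5 = (s + r) / 2) : ∃ t : ℤ, t ^ 5 - 5 * t ^ 3 + 5 * t = s := by
  obtain ⟨p, q, rfl⟩ := exists_eq_add_mul_of_mem_adjoin hr (d := (s : ℚ) ^ 2 - 4)
    (by push_cast; exact hsq) hy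
  set D : ℚ := (s : ℚ) ^ 2 - 4 with hD
  have hsq' : r ^ 2 = (D : ℝ) := by rw [hD]; push_cast; exact hsq
  have hr4 : r ^ 4 = (D : ℝ) ^ 2 := by rw [← hsq']; ring
  have hcoord := hr.eq_and_eq_of_add_mul_eq (p := s / 2) (q := 1 / 2)
    (a := p ^ 5 + 10 * p ^ 3 * q ^ 2 * D + 5 * p * q ^ 4 * D ^ 2)
    (b := 5 * p ^ 4 * q + 10 * p ^ 2 * q ^ 3 * D + q ^ 5 * D ^ 2) (by
      push_cast
      linear_combination hy5 - (10 * (p : ℝ) ^ 3 * q ^ 2 + 10 * (p : ℝ) ^ 2 * q ^ 3 * r) * hsq'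
        - (5 * (p : ℝ) * q ^ 4 + q ^ 5 * r) * hr4)
  obtain ⟨hA, hB⟩ := hcoord
  have hnorm : (p ^ 2 - q ^ 2 * D) ^ 5 = 1 := by
    have : (p ^ 2 - q ^ 2 * D) ^ 5 =
        (p ^ 5 + 10 * p ^ 3 * q ^ 2 * D + 5 * p * q ^ 4 * D ^ 2) ^ 2 -
        (5 * p ^ 4 * q + 10 * p ^ 2 * q ^ 3 * D + q ^ 5 * D ^ 2) ^ 2 * D := by ring
    rw [this, hA, hB, hD]
    ring
  have hN : p ^ 2 - q ^ 2 * D = 1 := by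
    have hodd : Odd 5 := by decide
    exact hodd.strictMono_pow.injective (by simpa using hnorm)
  have hq : q ^ 2 * D = p ^ 2 - 1 := by linarith
  have ht : (2 * p) ^ 5 - 5 * (2 * p) ^ 3 + 5 * (2 * p) = s := by
    have h4 : q ^ 4 * D ^ 2 = (p ^ 2 - 1) ^ 2 := by rw [← hq]; ring
    linear_combination 2 * hA - 20 * p ^ 3 * hq - 10 * p * h4
  have hint : IsIntegral ℤ (2 * p) := by
    refine ⟨Polynomial.X ^ 5 - 5 * Polynomial.X ^ 3 + 5 * Polynomial.X - Polynomial.C s, ?_, ?_⟩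
    · monicity!
    · have h5 : Polynomial.eval₂ (Int.castRingHom ℚ) (2 * p) 5 = 5 := Polynomial.eval₂_ofNat 5 _ _
      simp only [Polynomial.eval₂_sub, Polynomial.eval₂_add, Polynomial.eval₂_mul,
        Polynomial.eval₂_pow, Polynomial.eval₂_X, Polynomial.eval₂_C, h5, ht,
        algebraMap_int_eq, Int.coe_castRingHom, sub_self]
  obtain ⟨t, ht'⟩ := IsIntegrallyClosed.isIntegral_iff.mp hint
  refine ⟨t, ?_⟩
  rw [← ht'] at ht
  simp only [algebraMap_int_eq, eq_intCast] at ht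
  exact_mod_cast ht

/-- For integers `α, β ≥ 2` with `α² − 125β² = 4` and `25 ∣ α + β`,
`d = (α+β)² − 4` and `ε₁ = ((α+β) + √d)/2`, the square `ε₁²` is not a fifth power in
the real quadratic field `k₁ = ℚ(√d) ⊆ ℝ`. -/
theorem stmt_13 (α β : ℤ) (hα : 2 ≤ α) (hβ : 2 ≤ β)
    (hpell : α ^ 2 - 125 * β ^ 2 = 4) (hcong : (25 : ℤ) ∣ (α + β))
    (d : ℤ) (hd : d = (α + β) ^ 2 - 4)
    (ε₁ : ℝ) (hε : ε₁ = (((α : ℝ) + (β : ℝ)) + Real.sqrt (d : ℝ)) / 2) :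
    ¬ ∃ x : IntermediateField.adjoin ℚ {Real.sqrt (d : ℝ)},
        (x : ℝ) ^ 5 = ε₁ ^ 2 := by
  rintro ⟨⟨x, hx⟩, hx5⟩
  simp only at hx5
  have hirr : Irrational (Real.sqrt (d : ℝ)) := by
    rw [hd]; exact irrational_sqrt_sq_sub_four (by linarith)
  have hd0 : (0 : ℝ) ≤ d := by
    exact_mod_cast (by rw [hd]; nlinarith : (0 : ℤ) ≤ d)
  have hsq : Real.sqrt (d : ℝ) ^ 2 = ((α + β : ℤ) : ℝ) ^ 2 - 4 := by
    rw [Real.sq_sqrt hd0, hd]; push_cast; ring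
  have hε0 : ε₁ ≠ 0 := by
    have h1 : (2 : ℝ) ≤ α := by exact_mod_cast hα
    have h2 : (2 : ℝ) ≤ β := by exact_mod_cast hβ
    have h3 := Real.sqrt_nonneg (d : ℝ)
    rw [hε]
    positivity
  have hmem : Real.sqrt (d : ℝ) ∈ IntermediateField.adjoin ℚ {Real.sqrt (d : ℝ)} :=
    IntermediateField.mem_adjoin_simple_self ℚ _
  have hεmem : ε₁ ∈ IntermediateField.adjoin ℚ {Real.sqrt (d : ℝ)} := by
    rw [hε]
    exact div_mem (add_mem (add_mem (intCast_mem _ α) (intCast_mem _ β)) hmem) (ofNat_mem _ 2)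
  have hy5 : (ε₁ / x ^ 2) ^ 5 = (((α + β : ℤ) : ℝ) + Real.sqrt (d : ℝ)) / 2 := by
    have h : (ε₁ / x ^ 2) ^ 5 = ε₁ ^ 5 / (x ^ 5) ^ 2 := by ring
    rw [h, hx5]
    push_cast
    rw [← hε]
    field_simp
  obtain ⟨t, ht⟩ := exists_quintic_eq_of_pow_five_eq hirr hsq
    (div_mem hεmem (pow_mem hx 2)) hy5
  exact quintic_ne_add α β (by linarith) (by linarith) hpell hcong t ht
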